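/- A finite simple graph G belongs to D̂_2 if and only if G is isomorphic to the complete graph K_4. -/

import Mathlib

open SimpleGraph

/-- The degree of a vertex in a finite simple graph. -/
noncomputable def degC {V : Type} [Fintype V] (G : SimpleGraph V) (v : V) : ℕ := by
  classical exact G.degree v

/-- The minimum degree of a finite simple graph. -/
noncomputable def minDegC {V : Type} [Fintype V] (G : SimpleGraph V) : ℕ := by
  classical exact G.minDegree

/-- `H` is a minor of `G`: there is a family of nonempty, pairwise disjoint,
connected branch sets, one for each vertex of `H`, such that every edge of `H`
is realised by an edge of `G` between the corresponding branch sets. -/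
def IsMinorOf {W V : Type} (H : SimpleGraph W) (G : SimpleGraph V) : Prop :=
  ∃ B : W → Set V,
    (∀ w, (B w).Nonempty) ∧
    (∀ u w : W, u ≠ w → Disjoint (B u) (B w)) ∧
    (∀ w, (G.induce (B w)).Connected) ∧
    (∀ ⦃u w : W⦄, H.Adj u w → ∃ a ∈ B u, ∃ b ∈ B w, G.Adj a b)

/-- `H` is a proper minor of `G`: a minor that is not isomorphic to `G`. -/
def IsProperMinorOf {W V : Type} (H : SimpleGraph W) (G : SimpleGraph V) : Prop :=
  IsMinorOf H G ∧ ¬ Nonempty (H ≃g G)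

/-- `G ∈ D_k`: every minor of `G` has minimum degree at most `k`. -/
def MemD (k : ℕ) {V : Type} (G : SimpleGraph V) : Prop :=
  ∀ (W : Type) [Fintype W] (H : SimpleGraph W), IsMinorOf H G → minDegC H ≤ k

/-- `G ∈ D̂_k`: `G ∉ D_k` but every proper minor of `G` is in `D_k`. -/
def MemDHat (k : ℕ) {V : Type} (G : SimpleGraph V) : Prop :=
  ¬ MemD k G ∧ ∀ (W : Type) [Fintype W] (H : SimpleGraph W), IsProperMinorOf H G → MemD k H

/-!
The point is that every finite graph of minimum degree at least three has a `K₄` minor. Contract two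
disjoint, adjacent, connected vertex sets `A` and `B` to roots, and let `C` be a nonempty set of
other vertices, each of degree at least three in the contracted graph on the two roots and `C`; the
roots themselves may have small degree, and to begin with there are no roots and `C` is everything.
Take `C` minimal. Then `C` is connected. If at most one vertex of `C` were adjacent to both roots,
one could merge the roots and make that vertex (or else any vertex of `C` adjacent to a root) the
second root: no vertex remaining in `C` loses degree, against minimality. If no vertex of `C` is
adjacent to a root, one forgets the roots and makes any vertex of `C` the only root. So two vertices
`c`, `d` of `C` are adjacent to both roots, and `A`, `B`, `{c}` and the rest of a path in `C` from
`c` to `d` are the branch sets of a `K₄`.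
-/

lemma exists_mem_subset_singleton {α : Type*} {s t : Set α} (hs : s.Subsingleton) (hst : s ⊆ t)
    (ht : t.Nonempty) : ∃ c ∈ t, s ⊆ {c} := by
  obtain rfl | ⟨c, rfl⟩ := hs.eq_empty_or_singleton
  · obtain ⟨c, hc⟩ := ht
    exact ⟨c, hc, Set.empty_subset _⟩
  · exact ⟨c, hst rfl, Set.Subset.rfl⟩

section Connectivity

variable {V W : Type*} {G : SimpleGraph V}

lemma connected_induce_singleton (G : SimpleGraph V) (v : V) : (G.induce {v}).Connected :=
  .of_subsingleton

lemma connected_induce_iUnion_support {H : SimpleGraph W} {B : W → Set V}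
    (hconn : ∀ w, (G.induce (B w)).Connected)
    (hadj : ∀ ⦃u w⦄, H.Adj u w → ∃ a ∈ B u, ∃ b ∈ B w, G.Adj a b) {u w : W} (p : H.Walk u w) :
    (G.induce (⋃ x ∈ p.support, B x)).Connected := by
  induction p with
  | @nil u =>
    have hsupp : ⋃ x ∈ (Walk.nil : H.Walk u u).support, B x = B u := by simp
    exact hsupp ▸ hconn u
  | @cons u _ _ h p ih =>
    obtain ⟨a, ha, b, hb, hab⟩ := hadj h
    have hsupp : ⋃ x ∈ (p.cons h).support, B x = B u ∪ ⋃ x ∈ p.support, B x := by simp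
    rw [hsupp]
    exact connected_induce_union (hconn _).preconnected ih.preconnected ha
      (Set.mem_biUnion p.start_mem_support hb) hab

lemma connected_induce_iUnion {H : SimpleGraph W} (hH : H.Connected) {B : W → Set V}
    (hconn : ∀ w, (G.induce (B w)).Connected)
    (hadj : ∀ ⦃u w⦄, H.Adj u w → ∃ a ∈ B u, ∃ b ∈ B w, G.Adj a b) :
    (G.induce (⋃ w, B w)).Connected := by
  obtain ⟨u⟩ := hH.nonempty
  obtain ⟨a, ha⟩ := (hconn u).nonempty
  refine induce_connected_of_patches a (Set.mem_iUnion_of_mem u ha) fun {b} hb ↦ ?_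
  obtain ⟨w, hbw⟩ := Set.mem_iUnion.1 hb
  obtain ⟨p⟩ := hH.preconnected u w
  exact ⟨⋃ x ∈ p.support, B x, Set.iUnion₂_subset fun x _ ↦ Set.subset_iUnion B x,
    Set.mem_biUnion p.start_mem_support ha, Set.mem_biUnion p.end_mem_support hbw,
    (connected_induce_iUnion_support hconn hadj p).preconnected _ _⟩

lemma exists_ssubset_adj_closed_of_not_connected_induce {S : Set V} (hS : S.Nonempty)
    (h : ¬ (G.induce S).Connected) :
    ∃ T ⊂ S, T.Nonempty ∧ ∀ v ∈ T, ∀ w ∈ S, G.Adj v w → w ∈ T := by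
  have : Nonempty S := hS.to_subtype
  have hpre : ¬ (G.induce S).Preconnected := fun hpre ↦ h ⟨hpre⟩
  simp only [Preconnected, not_forall] at hpre
  obtain ⟨x, y, hxy⟩ := hpre
  refine ⟨(↑) '' {z : S | (G.induce S).Reachable x z}, ?_, ⟨x, x, .refl x, rfl⟩, ?_⟩
  · refine Set.ssubset_iff_exists.2 ⟨Subtype.coe_image_subset S _, y, y.2, ?_⟩
    rintro ⟨z, hz, hzy⟩
    exact hxy (Subtype.ext hzy ▸ hz)
  · rintro _ ⟨z, hz, rfl⟩ w hw hzw
    have hadj : (G.induce S).Adj z ⟨w, hw⟩ := hzw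
    exact ⟨⟨w, hw⟩, hz.trans hadj.reachable, rfl⟩

lemma exists_connected_induce_notMem_of_connected_induce {S : Set V} (hS : (G.induce S).Connected)
    {c d : V} (hc : c ∈ S) (hd : d ∈ S) (hcd : c ≠ d) :
    ∃ D ⊆ S, (G.induce D).Connected ∧ c ∉ D ∧ d ∈ D ∧ ∃ e ∈ D, G.Adj c e := by
  obtain ⟨p, hp⟩ := hS.preconnected.exists_isPath ⟨c, hc⟩ ⟨d, hd⟩
  cases p with
  | nil => exact absurd rfl hcd
  | @cons _ e _ hce q =>
    let q' := q.map (Embedding.induce S).toHom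
    have hsupp : ∀ x ∈ q'.support, ∃ h : x ∈ S, ⟨x, h⟩ ∈ q.support := fun x hx ↦ by
      rw [Walk.support_map, List.mem_map] at hx
      obtain ⟨y, hy, rfl⟩ := hx
      exact ⟨y.2, hy⟩
    exact ⟨{x | x ∈ q'.support}, fun x hx ↦ (hsupp x hx).1, q'.connected_induce_support,
      fun h ↦ ((Walk.cons_isPath_iff hce q).1 hp).2 (hsupp c h).2, q'.end_mem_support,
      e, q'.start_mem_support, hce⟩

end Connectivity

section Minor

variable {U V W : Type} {G : SimpleGraph V} {H : SimpleGraph W} {K : SimpleGraph U}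

lemma IsMinorOf.trans (hKH : IsMinorOf K H) (hHG : IsMinorOf H G) : IsMinorOf K G := by
  obtain ⟨B, hBne, hBdisj, hBconn, hBadj⟩ := hKH
  obtain ⟨C, hCne, hCdisj, hCconn, hCadj⟩ := hHG
  refine ⟨fun u ↦ ⋃ w : B u, C w, fun u ↦ ?_, fun u u' huu' ↦ ?_, fun u ↦ ?_, fun u u' h ↦ ?_⟩
  · obtain ⟨w, hw⟩ := hBne u
    exact (hCne w).mono (Set.subset_iUnion (fun w : B u ↦ C w) ⟨w, hw⟩)
  · simp only [Set.disjoint_iUnion_left, Set.disjoint_iUnion_right]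
    exact fun w' w ↦ hCdisj _ _ ((hBdisj u u' huu').ne_of_mem w.2 w'.2)
  · exact connected_induce_iUnion (hBconn u) (fun w ↦ hCconn w) fun _ _ h ↦ hCadj h
  · obtain ⟨w, hw, w', hw', hww'⟩ := hBadj h
    obtain ⟨a, ha, b, hb, hab⟩ := hCadj hww'
    exact ⟨a, Set.mem_iUnion_of_mem ⟨w, hw⟩ ha, b, Set.mem_iUnion_of_mem ⟨w', hw'⟩ hb, hab⟩

lemma IsMinorOf.of_isContained (h : H ⊑ G) : IsMinorOf H G := by
  obtain ⟨f⟩ := h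
  exact ⟨fun w ↦ {f w}, fun w ↦ Set.singleton_nonempty _,
    fun u w huw ↦ Set.disjoint_singleton.2 (f.injective.ne huw),
    fun w ↦ connected_induce_singleton G _, fun u w huw ↦ ⟨_, rfl, _, rfl, f.toHom.map_adj huw⟩⟩

lemma isMinorOf_top_of_lt [LinearOrder W] (B : W → Set V)
    (hconn : ∀ w, (G.induce (B w)).Connected) (hdisj : ∀ u w, u < w → Disjoint (B u) (B w))
    (hadj : ∀ u w, u < w → ∃ a ∈ B u, ∃ b ∈ B w, G.Adj a b) :
    IsMinorOf (⊤ : SimpleGraph W) G := by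
  refine ⟨B, fun w ↦ Set.nonempty_coe_sort.1 (hconn w).nonempty, fun u w huw ↦ ?_, hconn,
    fun u w huw ↦ ?_⟩
  · exact huw.lt_or_gt.elim (hdisj u w) fun h ↦ (hdisj w u h).symm
  · refine (top_adj u w |>.1 huw).lt_or_gt.elim (hadj u w) fun h ↦ ?_
    obtain ⟨b, hb, a, ha, hba⟩ := hadj w u h
    exact ⟨a, ha, b, hb, hba.symm⟩

lemma IsMinorOf.card_le [Finite V] (h : IsMinorOf H G) : Nat.card W ≤ Nat.card V := by
  obtain ⟨B, hne, hdisj, -⟩ := h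
  choose f hf using hne
  refine Nat.card_le_card_of_injective f fun u w huw ↦ ?_
  by_contra huw_ne
  exact (hdisj u w huw_ne).ne_of_mem (hf u) (hf w) huw

lemma IsMinorOf.isContained_of_card_le [Finite V] (h : IsMinorOf H G)
    (hcard : Nat.card V ≤ Nat.card W) : H ⊑ G := by
  obtain ⟨B, hne, hdisj, -, hadj⟩ := h
  choose f hf using hne
  have heq : ∀ {u w}, f u ∈ B w → u = w := fun {u w} huw ↦ by
    by_contra huw_ne
    exact (hdisj u w huw_ne).ne_of_mem (hf u) huw rfl
  have hinj : f.Injective := fun u w huw ↦ heq (huw ▸ hf w)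
  -- Representatives of the branch sets exhaust `G`, so every branch set is a single vertex.
  have hbij : f.Bijective := hinj.bijective_of_nat_card_le hcard
  refine ⟨⟨⟨f, fun {u w} huw ↦ ?_⟩, hinj⟩⟩
  obtain ⟨a, ha, b, hb, hab⟩ := hadj huw
  obtain ⟨u', rfl⟩ := hbij.2 a
  obtain ⟨w', rfl⟩ := hbij.2 b
  rwa [heq ha, heq hb] at hab

lemma nonempty_iso_top_of_top_isMinorOf [Finite V] (h : IsMinorOf (⊤ : SimpleGraph W) G)
    (hcard : Nat.card V ≤ Nat.card W) : Nonempty (G ≃g (⊤ : SimpleGraph W)) := by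
  obtain ⟨f⟩ := h.isContained_of_card_le hcard
  have hsurj : Function.Surjective f := (f.injective.bijective_of_nat_card_le hcard).2
  exact ⟨(RelIso.ofSurjective f.topEmbedding hsurj).symm⟩

end Minor

section MinDegree

variable {V : Type} {G : SimpleGraph V} {k : ℕ}

lemma minDegC_eq_minDegree [Fintype V] [DecidableRel G.Adj] : minDegC G = G.minDegree := by
  unfold minDegC
  convert rfl

lemma minDegC_top (V : Type) [Fintype V] :
    minDegC (⊤ : SimpleGraph V) = Fintype.card V - 1 := by
  classical
  rw [minDegC_eq_minDegree, minDegree_top]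

lemma nonempty_of_minDegC_pos [Fintype V] (h : 0 < minDegC G) : Nonempty V := by
  classical
  by_contra hV
  rw [not_nonempty_iff] at hV
  rw [minDegC_eq_minDegree, minDegree_of_subsingleton] at h
  exact h.false

lemma not_memD_of_top_isMinorOf (h : IsMinorOf (⊤ : SimpleGraph (Fin (k + 2))) G) :
    ¬ MemD k G := by
  intro hG
  have hle := hG _ _ h
  rw [minDegC_top, Fintype.card_fin] at hle
  omega

lemma memDHat_iff_nonempty_iso_top
    (hk : ∀ (W : Type) [Fintype W] (H : SimpleGraph W), k < minDegC H →
      IsMinorOf (⊤ : SimpleGraph (Fin (k + 2))) H) :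
    MemDHat k G ↔ Nonempty (G ≃g (⊤ : SimpleGraph (Fin (k + 2)))) := by
  have top_isMinorOf : ∀ {W : Type} {H : SimpleGraph W}, ¬ MemD k H →
      IsMinorOf (⊤ : SimpleGraph (Fin (k + 2))) H := fun h ↦ by
    simp only [MemD, not_forall, not_le] at h
    obtain ⟨U, _, K, hKH, hdeg⟩ := h
    exact (hk U K hdeg).trans hKH
  refine ⟨fun ⟨hG, hmin⟩ ↦ ?_, fun ⟨e⟩ ↦ ⟨?_, fun W _ H ⟨hHG, hiso⟩ ↦ ?_⟩⟩
  · by_contra hiso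
    exact not_memD_of_top_isMinorOf (.of_isContained .rfl)
      (hmin _ _ ⟨top_isMinorOf hG, fun ⟨e⟩ ↦ hiso ⟨e.symm⟩⟩)
  · exact not_memD_of_top_isMinorOf (.of_isContained e.symm.isContained)
  · by_contra hH
    have : Finite V := .of_equiv _ e.toEquiv.symm
    have hcard : Nat.card W ≤ Nat.card (Fin (k + 2)) :=
      hHG.card_le.trans_eq (Nat.card_congr e.toEquiv)
    obtain ⟨f⟩ := nonempty_iso_top_of_top_isMinorOf (top_isMinorOf hH) hcard
    exact hiso ⟨f.trans e.symm⟩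

end MinDegree

section ContractedDegree

variable {V : Type*} {G : SimpleGraph V} {A B : Set V} {C D : Finset V} {c v : V}

/-- The vertices with a neighbour in `A`; they are the neighbours of the root to which `A` is
contracted. Vertices of `A` itself are not excluded. -/
def neighborsOfSet (G : SimpleGraph V) (A : Set V) : Set V :=
  {v | ∃ a ∈ A, G.Adj v a}

@[simp]
lemma neighborsOfSet_empty (G : SimpleGraph V) : neighborsOfSet G ∅ = ∅ := by
  simp [neighborsOfSet]

@[simp]
lemma mem_neighborsOfSet_singleton : v ∈ neighborsOfSet G {c} ↔ G.Adj v c := by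
  simp [neighborsOfSet]

@[simp]
lemma neighborsOfSet_union (G : SimpleGraph V) (A B : Set V) :
    neighborsOfSet G (A ∪ B) = neighborsOfSet G A ∪ neighborsOfSet G B := by
  ext v
  simp [neighborsOfSet, or_and_right, exists_or]

open scoped Classical in
/-- The degree of a vertex `v ∈ C` in the graph induced on `A ∪ B ∪ C` with `A` and with `B`
contracted to a root each. -/
noncomputable def contractedDegree (G : SimpleGraph V) (A B : Set V) (C : Finset V) (v : V) : ℕ :=
  (C.filter (G.Adj v)).card + (if v ∈ neighborsOfSet G A then 1 else 0) +
    (if v ∈ neighborsOfSet G B then 1 else 0)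

lemma contractedDegree_empty_univ [Fintype V] [DecidableRel G.Adj] (v : V) :
    contractedDegree G ∅ ∅ Finset.univ v = G.degree v := by
  simp only [contractedDegree, neighborsOfSet_empty, Set.mem_empty_iff_false, if_false, add_zero,
    ← card_neighborFinset_eq_degree, neighborFinset_eq_filter]
  congr!

lemma contractedDegree_eq_of_subset (hDC : D ⊆ C) (h : ∀ w ∈ C, G.Adj v w → w ∈ D) :
    contractedDegree G A B D v = contractedDegree G A B C v := by
  classical
  have hfilter : D.filter (G.Adj v) = C.filter (G.Adj v) := by
    ext w
    simp only [Finset.mem_filter]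
    exact ⟨fun hw ↦ ⟨hDC hw.1, hw.2⟩, fun hw ↦ ⟨h w hw.1 hw.2, hw.2⟩⟩
  simp only [contractedDegree, hfilter]

lemma contractedDegree_eq_empty (hA : v ∉ neighborsOfSet G A) (hB : v ∉ neighborsOfSet G B) :
    contractedDegree G A B C v = contractedDegree G ∅ ∅ C v := by
  simp [contractedDegree, hA, hB]

lemma contractedDegree_union_singleton_erase [DecidableEq V] (hc : c ∈ C)
    (hv : v ∈ neighborsOfSet G A → v ∉ neighborsOfSet G B) :
    contractedDegree G (A ∪ B) {c} (C.erase c) v = contractedDegree G A B C v := by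
  classical
  have hroot : (if v ∈ neighborsOfSet G (A ∪ B) then 1 else 0) =
      (if v ∈ neighborsOfSet G A then 1 else 0) + (if v ∈ neighborsOfSet G B then 1 else 0) := by
    rw [neighborsOfSet_union, Set.mem_union]
    split_ifs <;> tauto
  have hcard : (C.filter (G.Adj v)).card =
      ((C.erase c).filter (G.Adj v)).card + if G.Adj v c then 1 else 0 := by
    rw [Finset.filter_erase]
    split_ifs with hvc
    · exact (Finset.card_erase_add_one (Finset.mem_filter.2 ⟨hc, hvc⟩)).symm
    · rw [Finset.erase_eq_of_notMem (by simp [hvc]), add_zero]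
  simp only [contractedDegree, hroot, hcard, mem_neighborsOfSet_singleton]
  ring

lemma exists_adj_of_two_lt_contractedDegree (h : 2 < contractedDegree G A B C v) :
    ∃ w ∈ C, G.Adj v w := by
  classical
  have hpos : 0 < (C.filter (G.Adj v)).card := by
    unfold contractedDegree at h
    split_ifs at h <;> omega
  obtain ⟨w, hw⟩ := Finset.card_pos.1 hpos
  exact ⟨w, Finset.mem_filter.1 hw⟩

end ContractedDegree

section RootPair

variable {V : Type*} {G : SimpleGraph V} {A B : Set V} {c : V}

/-- `A` and `B` can be contracted to two adjacent roots, both outside `C`. Either set may be empty,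
in which case that root is absent: this makes the pair `∅, ∅` a starting configuration. -/
structure IsRootPair (G : SimpleGraph V) (A B C : Set V) : Prop where
  preconnected_left : (G.induce A).Preconnected
  preconnected_right : (G.induce B).Preconnected
  disjoint : Disjoint A B
  disjoint_union : Disjoint (A ∪ B) C
  adj : A.Nonempty → B.Nonempty → ∃ a ∈ A, ∃ b ∈ B, G.Adj a b

namespace IsRootPair

variable {C : Set V}

lemma empty (G : SimpleGraph V) (C : Set V) : IsRootPair G ∅ ∅ C where
  preconnected_left := .of_subsingleton
  preconnected_right := .of_subsingleton
  disjoint := disjoint_bot_left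
  disjoint_union := by simp
  adj h := (Set.not_nonempty_empty h).elim

lemma mono {D : Set V} (h : IsRootPair G A B C) (hDC : D ⊆ C) : IsRootPair G A B D :=
  { h with disjoint_union := h.disjoint_union.mono_right hDC }

lemma preconnected_union (h : IsRootPair G A B C) : (G.induce (A ∪ B)).Preconnected := by
  obtain rfl | hA := A.eq_empty_or_nonempty
  · rw [Set.empty_union]
    exact h.preconnected_right
  obtain rfl | hB := B.eq_empty_or_nonempty
  · rw [Set.union_empty]
    exact h.preconnected_left
  obtain ⟨a, ha, b, hb, hab⟩ := h.adj hA hB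
  exact (connected_induce_union h.preconnected_left h.preconnected_right ha hb hab).preconnected

lemma union_singleton (h : IsRootPair G A B C) (hc : c ∈ C)
    (hadj : (A ∪ B).Nonempty → c ∈ neighborsOfSet G (A ∪ B)) :
    IsRootPair G (A ∪ B) {c} (C \ {c}) where
  preconnected_left := h.preconnected_union
  preconnected_right := (connected_induce_singleton G c).preconnected
  disjoint := h.disjoint_union.mono_right (Set.singleton_subset_iff.2 hc)
  disjoint_union := Set.disjoint_union_left.2
    ⟨h.disjoint_union.mono_right Set.sdiff_subset, Set.disjoint_sdiff_right⟩
  adj hAB _ := by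
    obtain ⟨a, ha, hca⟩ := hadj hAB
    exact ⟨a, ha, c, rfl, hca.symm⟩

end IsRootPair

/-- The induction hypothesis of the `K₄` minor theorem: once `A` and `B` are contracted to adjacent
roots, each vertex of the nonempty set `C` has degree at least three. The roots themselves may have
smaller degree. -/
structure HasContractedMinDegreeThree (G : SimpleGraph V) (A B : Set V) (C : Finset V) : Prop
    extends IsRootPair G A B C where
  nonempty : C.Nonempty
  two_lt_contractedDegree : ∀ v ∈ C, 2 < contractedDegree G A B C v

namespace HasContractedMinDegreeThree

variable {C : Finset V}

lemma exists_ssubset_of_not_connected (h : HasContractedMinDegreeThree G A B C)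
    (hC : ¬ (G.induce (C : Set V)).Connected) :
    ∃ T ⊂ C, HasContractedMinDegreeThree G A B T := by
  obtain ⟨T, hTC, hTne, hT⟩ := exists_ssubset_adj_closed_of_not_connected_induce h.nonempty hC
  lift T to Finset V using C.finite_toSet.subset hTC.subset
  refine ⟨T, Finset.coe_ssubset.1 hTC, h.mono hTC.subset, hTne, fun v hv ↦ ?_⟩
  rw [contractedDegree_eq_of_subset hTC.subset (hT v hv)]
  exact h.two_lt_contractedDegree v (hTC.subset hv)

lemma merge_roots [DecidableEq V] (h : HasContractedMinDegreeThree G A B C) (hc : c ∈ C)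
    (hadj : (A ∪ B).Nonempty → c ∈ neighborsOfSet G (A ∪ B))
    (hcommon : (C ∩ (neighborsOfSet G A ∩ neighborsOfSet G B) : Set V) ⊆ {c}) :
    HasContractedMinDegreeThree G (A ∪ B) {c} (C.erase c) where
  toIsRootPair := by simpa using h.union_singleton hc hadj
  nonempty := by
    obtain ⟨w, hw, hcw⟩ :=
      exists_adj_of_two_lt_contractedDegree (h.two_lt_contractedDegree c hc)
    exact ⟨w, Finset.mem_erase.2 ⟨hcw.ne', hw⟩⟩
  two_lt_contractedDegree v hv := by
    obtain ⟨hvc, hvC⟩ := Finset.mem_erase.1 hv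
    rw [contractedDegree_union_singleton_erase hc fun hA hB ↦ hvc (hcommon ⟨hvC, hA, hB⟩)]
    exact h.two_lt_contractedDegree v hvC

lemma forget_roots (h : HasContractedMinDegreeThree G A B C)
    (hroot : (C ∩ neighborsOfSet G (A ∪ B) : Set V) = ∅) :
    HasContractedMinDegreeThree G ∅ ∅ C where
  toIsRootPair := .empty G C
  nonempty := h.nonempty
  two_lt_contractedDegree v hv := by
    have hvAB : v ∉ neighborsOfSet G (A ∪ B) := fun hvAB ↦ hroot.subset ⟨hv, hvAB⟩
    rw [neighborsOfSet_union, Set.mem_union, not_or] at hvAB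
    rw [← contractedDegree_eq_empty hvAB.1 hvAB.2]
    exact h.two_lt_contractedDegree v hv

end HasContractedMinDegreeThree

end RootPair

section CompleteGraphFour

variable {V : Type} {G : SimpleGraph V} {A B : Set V}

lemma IsRootPair.top_fin_four_isMinorOf_of_connected {C : Set V} (h : IsRootPair G A B C)
    (hC : (G.induce C).Connected)
    (hcommon : (C ∩ (neighborsOfSet G A ∩ neighborsOfSet G B)).Nontrivial) :
    IsMinorOf (⊤ : SimpleGraph (Fin 4)) G := by
  obtain ⟨c, ⟨hc, ⟨a, ha, hca⟩, b, hb, hcb⟩, d, ⟨hd, ⟨a', ha', hda⟩, b', hb', hdb⟩, hcd⟩ := hcommon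
  obtain ⟨D, hDC, hD, hcD, hdD, hcD'⟩ :=
    exists_connected_induce_notMem_of_connected_induce hC hc hd hcd
  obtain ⟨hAC, hBC⟩ := Set.disjoint_union_left.1 h.disjoint_union
  have hAconn : (G.induce A).Connected := (connected_iff _).2 ⟨h.preconnected_left, ⟨a, ha⟩⟩
  have hBconn : (G.induce B).Connected := (connected_iff _).2 ⟨h.preconnected_right, ⟨b, hb⟩⟩
  refine isMinorOf_top_of_lt ![A, B, {c}, D] ?_ ?_ ?_
  · simp [Fin.forall_fin_succ, hAconn, hBconn, hD]
  · have hAc : c ∉ A := hAC.notMem_of_mem_right hc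
    have hBc : c ∉ B := hBC.notMem_of_mem_right hc
    simp [Fin.forall_fin_succ, h.disjoint, hAc, hBc, hcD, hAC.mono_right hDC, hBC.mono_right hDC]
  · have hAB : ∃ a ∈ A, ∃ b ∈ B, G.Adj a b := h.adj ⟨a, ha⟩ ⟨b, hb⟩
    have hAc : ∃ a ∈ A, G.Adj a c := ⟨a, ha, hca.symm⟩
    have hBc : ∃ b ∈ B, G.Adj b c := ⟨b, hb, hcb.symm⟩
    have hAD : ∃ a ∈ A, ∃ d ∈ D, G.Adj a d := ⟨a', ha', d, hdD, hda.symm⟩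
    have hBD : ∃ b ∈ B, ∃ d ∈ D, G.Adj b d := ⟨b', hb', d, hdD, hdb.symm⟩
    simp [Fin.forall_fin_succ, hAB, hAc, hBc, hAD, hBD, hcD']

theorem HasContractedMinDegreeThree.top_fin_four_isMinorOf {C : Finset V}
    (h : HasContractedMinDegreeThree G A B C) : IsMinorOf (⊤ : SimpleGraph (Fin 4)) G := by
  classical
  induction C using Finset.strongInduction generalizing A B with | H C ih
  by_cases hconn : (G.induce (C : Set V)).Connected
  swap
  · obtain ⟨T, hTC, hT⟩ := h.exists_ssubset_of_not_connected hconn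
    exact ih T hTC hT
  by_cases hcommon : (C ∩ (neighborsOfSet G A ∩ neighborsOfSet G B) : Set V).Subsingleton
  swap
  · exact h.top_fin_four_isMinorOf_of_connected hconn (Set.not_subsingleton_iff.1 hcommon)
  by_cases hroot : (C ∩ neighborsOfSet G (A ∪ B) : Set V).Nonempty
  · have hsub : neighborsOfSet G A ∩ neighborsOfSet G B ⊆ neighborsOfSet G (A ∪ B) := by
      rw [neighborsOfSet_union]
      exact Set.inter_subset_left.trans Set.subset_union_left
    obtain ⟨c, hc, hcommon_c⟩ :=
      exists_mem_subset_singleton hcommon (Set.inter_subset_inter_right _ hsub) hroot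
    exact ih _ (Finset.erase_ssubset hc.1) (h.merge_roots hc.1 (fun _ ↦ hc.2) hcommon_c)
  · obtain ⟨c, hc⟩ := h.nonempty
    exact ih _ (Finset.erase_ssubset hc)
      ((h.forget_roots (Set.not_nonempty_iff_eq_empty.1 hroot)).merge_roots hc (by simp) (by simp))

theorem top_fin_four_isMinorOf_of_two_lt_minDegC [Fintype V] (h : 2 < minDegC G) :
    IsMinorOf (⊤ : SimpleGraph (Fin 4)) G := by
  classical
  have : Nonempty V := nonempty_of_minDegC_pos (pos_of_gt h)
  refine HasContractedMinDegreeThree.top_fin_four_isMinorOf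
    ⟨IsRootPair.empty G _, Finset.univ_nonempty, fun v _ ↦ ?_⟩
  rw [contractedDegree_empty_univ]
  rw [minDegC_eq_minDegree] at h
  exact h.trans_le (G.minDegree_le_degree v)

end CompleteGraphFour

theorem memDHat_two_iff_general {V : Type} (G : SimpleGraph V) :
    MemDHat 2 G ↔ Nonempty (G ≃g (⊤ : SimpleGraph (Fin 4))) :=
  memDHat_iff_nonempty_iso_top (k := 2) fun _ _ _ ↦ top_fin_four_isMinorOf_of_two_lt_minDegC

/-- Proposition 2.2: `D̂_2 = {K_4}`. -/
theorem memDHat_two_iff (V : Type) [Fintype V] (G : SimpleGraph V) :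
    MemDHat 2 G ↔ Nonempty (G ≃g (⊤ : SimpleGraph (Fin 4))) :=
  memDHat_two_iff_general G
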